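/- The GP-DDF⁺ predictive covariance equals the PIC predictive covariance in the different-vehicle case: if τ_s = i ≠ j = τ_{s'}, then σ_{ss'} − Γ̃_{sD}(Γ_DD + Λ)⁻¹ Γ̃_{Ds'} = Σ_{ss'|U} + γ_{sU}^i Σ̈_UU⁻¹ γ_{Us'}^j, where Σ_{ss'|U} ≜ σ_{ss'} − Σ_{sU} Σ_UU⁻¹ Σ_{Us'}. -/

import Mathlib

/-!
Outside its own block, each test-to-data covariance is the Nyström one. So with `Γ_UD`, `Γ_DU` the
block row and block column of the `Σ_{U D_k}`, `Σ_{D_k U}`, it is `Σ_sU Σ_UU⁻¹ Γ_UD` (resp.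
`Γ_DU Σ_UU⁻¹ Σ_Us'`) plus a correction `e` (resp. `f`) supported on block `i` (resp. `j`).
Put `M = Γ_DU Σ_UU⁻¹ Γ_UD + Λ` and `S = Σ_UU + Γ_UD Λ⁻¹ Γ_DU`. The Woodbury and push-through
identities turn the product of the two covariances through `M⁻¹` into
`Σ_sU Σ_UU⁻¹ Σ_Us' + e Λ⁻¹ f − (Σ_sU − e Λ⁻¹ Γ_DU) S⁻¹ (Σ_Us' − Γ_UD Λ⁻¹ f)`,
whose two bracketed factors are the local terms `γ_sU^i` and `γ_Us'^j`. Since `Λ` is block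
diagonal, `e Λ⁻¹ f` vanishes when `i ≠ j`.
-/

open Matrix

section Woodbury

variable {U D m n α : Type*} [Fintype U] [DecidableEq U] [Fintype D] [DecidableEq D] [CommRing α]
  {A : Matrix U U α} {Λ : Matrix D D α} {B : Matrix U D α} {C : Matrix D U α}

lemma inv_mul_mul_inv_add_self {X : Matrix U U α} (hA : IsUnit A) (hAX : IsUnit (A + X)) :
    A⁻¹ * X * (A + X)⁻¹ = A⁻¹ - (A + X)⁻¹ := by
  rw [inv_sub_inv (iff_of_true hA hAX), add_sub_cancel_left]

lemma inv_add_self_mul_mul_inv {X : Matrix U U α} (hA : IsUnit A) (hAX : IsUnit (A + X)) :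
    (A + X)⁻¹ * X * A⁻¹ = A⁻¹ - (A + X)⁻¹ := by
  rw [← neg_sub, inv_sub_inv (iff_of_true hAX hA), sub_add_cancel_left, Matrix.mul_neg,
    Matrix.neg_mul, neg_neg]

lemma inv_mul_mul_add_eq_sub (hA : IsUnit A) (hΛ : IsUnit Λ) (hS : IsUnit (A + B * Λ⁻¹ * C)) :
    (C * A⁻¹ * B + Λ)⁻¹ = Λ⁻¹ - Λ⁻¹ * C * (A + B * Λ⁻¹ * C)⁻¹ * B * Λ⁻¹ := by
  have hAinv : A⁻¹⁻¹ = A := nonsing_inv_nonsing_inv A (A.isUnit_iff_isUnit_det.1 hA)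
  rw [add_comm, add_mul_mul_inv_eq_sub Λ C A⁻¹ B hΛ (isUnit_nonsing_inv_iff.2 hA)
    (by rwa [hAinv]), hAinv]

lemma push_through_inv_left (hA : IsUnit A) (hΛ : IsUnit Λ) (hS : IsUnit (A + B * Λ⁻¹ * C)) :
    A⁻¹ * B * (C * A⁻¹ * B + Λ)⁻¹ = (A + B * Λ⁻¹ * C)⁻¹ * B * Λ⁻¹ := by
  rw [inv_mul_mul_add_eq_sub hA hΛ hS]
  calc A⁻¹ * B * (Λ⁻¹ - Λ⁻¹ * C * (A + B * Λ⁻¹ * C)⁻¹ * B * Λ⁻¹)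
      = A⁻¹ * B * Λ⁻¹ - A⁻¹ * (B * Λ⁻¹ * C) * (A + B * Λ⁻¹ * C)⁻¹ * B * Λ⁻¹ := by
        simp only [Matrix.mul_sub, Matrix.mul_assoc]
    _ = (A + B * Λ⁻¹ * C)⁻¹ * B * Λ⁻¹ := by
        rw [inv_mul_mul_inv_add_self hA hS, Matrix.sub_mul, Matrix.sub_mul, sub_sub_cancel]

lemma push_through_inv_right (hA : IsUnit A) (hΛ : IsUnit Λ) (hS : IsUnit (A + B * Λ⁻¹ * C)) :
    (C * A⁻¹ * B + Λ)⁻¹ * C * A⁻¹ = Λ⁻¹ * C * (A + B * Λ⁻¹ * C)⁻¹ := by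
  rw [inv_mul_mul_add_eq_sub hA hΛ hS]
  calc (Λ⁻¹ - Λ⁻¹ * C * (A + B * Λ⁻¹ * C)⁻¹ * B * Λ⁻¹) * C * A⁻¹
      = Λ⁻¹ * C * A⁻¹ - Λ⁻¹ * C * ((A + B * Λ⁻¹ * C)⁻¹ * (B * Λ⁻¹ * C) * A⁻¹) := by
        simp only [Matrix.sub_mul, Matrix.mul_assoc]
    _ = Λ⁻¹ * C * (A + B * Λ⁻¹ * C)⁻¹ := by
        rw [inv_add_self_mul_mul_inv hA hS, Matrix.mul_sub, sub_sub_cancel]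

lemma inv_mul_mul_inv_mul_mul_inv_eq_inv_sub_inv (hA : IsUnit A) (hΛ : IsUnit Λ)
    (hS : IsUnit (A + B * Λ⁻¹ * C)) :
    A⁻¹ * B * (C * A⁻¹ * B + Λ)⁻¹ * C * A⁻¹ = A⁻¹ - (A + B * Λ⁻¹ * C)⁻¹ := by
  rw [push_through_inv_left hA hΛ hS, ← inv_add_self_mul_mul_inv hA hS]
  simp only [Matrix.mul_assoc]

lemma add_mul_inv_mul_add_eq_sub (hA : IsUnit A) (hΛ : IsUnit Λ) (hS : IsUnit (A + B * Λ⁻¹ * C))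
    (a : Matrix m U α) (b : Matrix U n α) (e : Matrix m D α) (f : Matrix D n α) :
    (a * A⁻¹ * B + e) * (C * A⁻¹ * B + Λ)⁻¹ * (C * A⁻¹ * b + f)
      = a * A⁻¹ * b + e * Λ⁻¹ * f
        - (a - e * Λ⁻¹ * C) * (A + B * Λ⁻¹ * C)⁻¹ * (b - B * Λ⁻¹ * f) := by
  calc (a * A⁻¹ * B + e) * (C * A⁻¹ * B + Λ)⁻¹ * (C * A⁻¹ * b + f)
      = a * (A⁻¹ * B * (C * A⁻¹ * B + Λ)⁻¹ * C * A⁻¹) * b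
        + a * (A⁻¹ * B * (C * A⁻¹ * B + Λ)⁻¹) * f
        + e * ((C * A⁻¹ * B + Λ)⁻¹ * C * A⁻¹) * b
        + e * (C * A⁻¹ * B + Λ)⁻¹ * f := by
        generalize (C * A⁻¹ * B + Λ)⁻¹ = M
        simp only [Matrix.add_mul, Matrix.mul_add, Matrix.mul_assoc]
        abel
    _ = a * (A⁻¹ - (A + B * Λ⁻¹ * C)⁻¹) * b
        + a * ((A + B * Λ⁻¹ * C)⁻¹ * B * Λ⁻¹) * f
        + e * (Λ⁻¹ * C * (A + B * Λ⁻¹ * C)⁻¹) * b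
        + e * (Λ⁻¹ - Λ⁻¹ * C * (A + B * Λ⁻¹ * C)⁻¹ * B * Λ⁻¹) * f := by
        rw [inv_mul_mul_inv_mul_mul_inv_eq_inv_sub_inv hA hΛ hS, push_through_inv_left hA hΛ hS,
          push_through_inv_right hA hΛ hS, inv_mul_mul_add_eq_sub hA hΛ hS]
    _ = _ := by
        generalize (A + B * Λ⁻¹ * C)⁻¹ = S
        simp only [Matrix.sub_mul, Matrix.mul_sub, Matrix.mul_assoc]
        abel

end Woodbury

section Blocks

variable {K l m n α : Type*} {δ : K → Type*}

/-- The block row `[B₁ B₂ …]` of a family of matrices with a common row index; its columns are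
indexed by the disjoint union of the column indices, as in `Matrix.blockDiagonal'`. -/
def blockRow (B : ∀ k, Matrix m (δ k) α) : Matrix m (Σ k, δ k) α :=
  of fun x d => B d.1 x d.2

/-- The block column obtained by stacking a family of matrices with a common column index; its rows
are indexed by the disjoint union of the row indices, as in `Matrix.blockDiagonal'`. -/
def blockCol (C : ∀ k, Matrix (δ k) n α) : Matrix (Σ k, δ k) n α :=
  of fun d y => C d.1 d.2 y

lemma of_ite_eq_blockRow_update [DecidableEq K] (T B : ∀ k, Matrix m (δ k) α) (i : K) :
    (of fun x (d : Σ k, δ k) => if d.1 = i then T d.1 x d.2 else B d.1 x d.2)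
      = blockRow (Function.update B i (T i)) := by
  ext x ⟨k, d⟩
  obtain rfl | hk := eq_or_ne k i
  · simp [blockRow]
  · simp [blockRow, hk]

lemma of_ite_eq_blockCol_update [DecidableEq K] (T C : ∀ k, Matrix (δ k) n α) (j : K) :
    (of fun (d : Σ k, δ k) y => if d.1 = j then T d.1 d.2 y else C d.1 d.2 y)
      = blockCol (Function.update C j (T j)) := by
  ext ⟨k, d⟩ y
  obtain rfl | hk := eq_or_ne k j
  · simp [blockCol]
  · simp [blockCol, hk]

lemma blockRow_update [DecidableEq K] [AddCommGroup α] (B : ∀ k, Matrix m (δ k) α) (i : K)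
    (E : Matrix m (δ i) α) :
    blockRow (Function.update B i E) = blockRow B + blockRow (Pi.single i (E - B i)) := by
  ext x ⟨k, d⟩
  obtain rfl | hk := eq_or_ne k i
  · simp [blockRow]
  · simp [blockRow, hk]

lemma blockCol_update [DecidableEq K] [AddCommGroup α] (C : ∀ k, Matrix (δ k) n α) (j : K)
    (F : Matrix (δ j) n α) :
    blockCol (Function.update C j F) = blockCol C + blockCol (Pi.single j (F - C j)) := by
  ext ⟨k, d⟩ y
  obtain rfl | hk := eq_or_ne k j
  · simp [blockCol]
  · simp [blockCol, hk]

section Semiring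

variable [NonUnitalNonAssocSemiring α]

lemma mul_blockRow [Fintype l] (A : Matrix m l α) (B : ∀ k, Matrix l (δ k) α) :
    A * blockRow B = blockRow fun k => A * B k :=
  rfl

lemma blockCol_mul [Fintype l] (C : ∀ k, Matrix (δ k) l α) (A : Matrix l n α) :
    blockCol C * A = blockCol fun k => C k * A :=
  rfl

variable [Fintype K] [∀ k, Fintype (δ k)]

lemma blockRow_mul_blockCol (B : ∀ k, Matrix m (δ k) α) (C : ∀ k, Matrix (δ k) n α) :
    blockRow B * blockCol C = ∑ k, B k * C k := by
  ext x y
  simp only [mul_apply, Fintype.sum_sigma, Matrix.sum_apply, blockRow, blockCol, of_apply]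

variable [DecidableEq K]

lemma blockRow_single_mul_blockCol (i : K) (E : Matrix m (δ i) α) (C : ∀ k, Matrix (δ k) n α) :
    blockRow (Pi.single i E) * blockCol C = E * C i := by
  rw [blockRow_mul_blockCol, Fintype.sum_eq_single i fun k hk => by
    rw [Pi.single_eq_of_ne hk, Matrix.zero_mul], Pi.single_eq_same]

lemma blockRow_mul_blockCol_single (B : ∀ k, Matrix m (δ k) α) (j : K) (F : Matrix (δ j) n α) :
    blockRow B * blockCol (Pi.single j F) = B j * F := by
  rw [blockRow_mul_blockCol, Fintype.sum_eq_single j fun k hk => by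
    rw [Pi.single_eq_of_ne hk, Matrix.mul_zero], Pi.single_eq_same]

lemma blockRow_mul_blockDiagonal' (B : ∀ k, Matrix m (δ k) α) (D : ∀ k, Matrix (δ k) (δ k) α) :
    blockRow B * blockDiagonal' D = blockRow fun k => B k * D k := by
  ext x ⟨k, d⟩
  rw [mul_apply, Fintype.sum_sigma, Fintype.sum_eq_single k fun k' hk => by
    simp only [blockDiagonal'_apply_ne _ _ _ hk, mul_zero, Finset.sum_const_zero]]
  simp only [blockDiagonal'_apply_eq, blockRow, of_apply, mul_apply]

lemma blockDiagonal'_mul_blockCol (D : ∀ k, Matrix (δ k) (δ k) α) (C : ∀ k, Matrix (δ k) n α) :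
    blockDiagonal' D * blockCol C = blockCol fun k => D k * C k := by
  ext ⟨k, d⟩ y
  rw [mul_apply, Fintype.sum_sigma, Fintype.sum_eq_single k fun k' hk => by
    simp only [blockDiagonal'_apply_ne _ _ _ hk.symm, zero_mul, Finset.sum_const_zero]]
  simp only [blockDiagonal'_apply_eq, blockCol, of_apply, mul_apply]

end Semiring

section Inverse

variable [Fintype K] [DecidableEq K] [∀ k, Fintype (δ k)] [∀ k, DecidableEq (δ k)] [CommRing α]
  {L : ∀ k, Matrix (δ k) (δ k) α}

lemma isUnit_blockDiagonal' (hL : ∀ k, IsUnit (L k)) : IsUnit (blockDiagonal' L) :=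
  (Pi.isUnit_iff.2 hL).map (blockDiagonal'RingHom δ α)

lemma inv_blockDiagonal' (hL : ∀ k, IsUnit (L k)) :
    (blockDiagonal' L)⁻¹ = blockDiagonal' fun k => (L k)⁻¹ := by
  refine inv_eq_right_inv ?_
  have hLinv : (fun k => L k * (L k)⁻¹) = 1 :=
    funext fun k => mul_nonsing_inv (L k) ((L k).isUnit_iff_isUnit_det.1 (hL k))
  rw [← blockDiagonal'_mul, hLinv, blockDiagonal'_one]

end Inverse

end Blocks

lemma posDef_add_sum_mul_inv_mul_conjTranspose {K U R : Type*} [Fintype K] [Finite U]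
    [CommRing R] [PartialOrder R] [StarRing R] [AddLeftMono R] {δ : K → Type*}
    [∀ k, Fintype (δ k)] [∀ k, DecidableEq (δ k)] {A : Matrix U U R} (hA : A.PosDef)
    (B : ∀ k, Matrix U (δ k) R) {L : ∀ k, Matrix (δ k) (δ k) R} (hL : ∀ k, (L k).PosSemidef) :
    (A + ∑ k, B k * (L k)⁻¹ * (B k)ᴴ).PosDef :=
  hA.add_posSemidef <| posSemidef_sum _ fun k _ => (hL k).inv.mul_mul_conjTranspose_same (B k)

theorem stmt8_general {K U m n α : Type*} [Fintype K] [DecidableEq K] [Fintype U] [DecidableEq U]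
    [CommRing α] {δ : K → Type*} [∀ k, Fintype (δ k)] [∀ k, DecidableEq (δ k)]
    {i j : K} (hij : i ≠ j) (σss' : Matrix m n α)
    (SsU : Matrix m U α) (SUs' : Matrix U n α) {SUU : Matrix U U α} (hUU : IsUnit SUU)
    (SsDi : Matrix m (δ i) α) (SDjs' : Matrix (δ j) n α)
    (SUD : ∀ k, Matrix U (δ k) α) (SDU : ∀ k, Matrix (δ k) U α)
    {L : ∀ k, Matrix (δ k) (δ k) α} (hL : ∀ k, IsUnit (L k))
    (hS : IsUnit (SUU + ∑ k, SUD k * (L k)⁻¹ * SDU k)) :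
    σss'
      - blockRow (Function.update (fun k => SsU * SUU⁻¹ * SUD k) i SsDi)
        * (blockCol SDU * SUU⁻¹ * blockRow SUD + blockDiagonal' L)⁻¹
        * blockCol (Function.update (fun k => SDU k * SUU⁻¹ * SUs') j SDjs')
    = (σss' - SsU * SUU⁻¹ * SUs')
      + (SsU + SsU * SUU⁻¹ * (SUD i * (L i)⁻¹ * SDU i) - SsDi * (L i)⁻¹ * SDU i)
        * (SUU + ∑ k, SUD k * (L k)⁻¹ * SDU k)⁻¹
        * (SUs' + SUD j * (L j)⁻¹ * SDU j * SUU⁻¹ * SUs' - SUD j * (L j)⁻¹ * SDjs') := by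
  set e := blockRow (Pi.single i (SsDi - SsU * SUU⁻¹ * SUD i)) with he
  set f := blockCol (Pi.single j (SDjs' - SDU j * SUU⁻¹ * SUs')) with hf
  have hrow : blockRow (Function.update (fun k => SsU * SUU⁻¹ * SUD k) i SsDi)
      = SsU * SUU⁻¹ * blockRow SUD + e := by
    rw [blockRow_update, mul_blockRow]
  have hcol : blockCol (Function.update (fun k => SDU k * SUU⁻¹ * SUs') j SDjs')
      = blockCol SDU * SUU⁻¹ * SUs' + f := by
    rw [blockCol_update, blockCol_mul, blockCol_mul]
  have hsum : SUU + ∑ k, SUD k * (L k)⁻¹ * SDU k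
      = SUU + blockRow SUD * (blockDiagonal' L)⁻¹ * blockCol SDU := by
    rw [inv_blockDiagonal' hL, blockRow_mul_blockDiagonal', blockRow_mul_blockCol]
  have heC : SsU + SsU * SUU⁻¹ * (SUD i * (L i)⁻¹ * SDU i) - SsDi * (L i)⁻¹ * SDU i
      = SsU - e * (blockDiagonal' L)⁻¹ * blockCol SDU := by
    rw [inv_blockDiagonal' hL, Matrix.mul_assoc e, blockDiagonal'_mul_blockCol, he,
      blockRow_single_mul_blockCol]
    simp only [Matrix.sub_mul, Matrix.mul_assoc]
    abel
  have hBf : SUs' + SUD j * (L j)⁻¹ * SDU j * SUU⁻¹ * SUs' - SUD j * (L j)⁻¹ * SDjs'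
      = SUs' - blockRow SUD * (blockDiagonal' L)⁻¹ * f := by
    rw [inv_blockDiagonal' hL, blockRow_mul_blockDiagonal', hf, blockRow_mul_blockCol_single]
    simp only [Matrix.mul_sub, Matrix.mul_assoc]
    abel
  have hef : e * (blockDiagonal' L)⁻¹ * f = 0 := by
    rw [inv_blockDiagonal' hL, Matrix.mul_assoc, blockDiagonal'_mul_blockCol, he,
      blockRow_single_mul_blockCol, Pi.single_eq_of_ne hij, Matrix.mul_zero, Matrix.mul_zero]
  rw [hsum] at hS
  rw [hrow, hcol, hsum, heC, hBf, add_mul_inv_mul_add_eq_sub hUU (isUnit_blockDiagonal' hL) hS, hef]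
  abel

/-- Theorem 1B (covariance part, different-vehicle case `τ_s = i ≠ j = τ_{s'}`):
`σ_{ss'} − Γ̃_{sD}(Γ_DD + Λ)⁻¹ Γ̃_{Ds'} = Σ_{ss'|U} + γ_{sU}^i Σ̈_UU⁻¹ γ_{Us'}^j`,
where `Σ_{ss'|U} = σ_{ss'} − Σ_{sU} Σ_UU⁻¹ Σ_{Us'}`. -/
theorem stmt8 {K U : Type*} [Fintype K] [DecidableEq K] [Fintype U] [DecidableEq U]
    {δ : K → Type*} [∀ k, Fintype (δ k)] [∀ k, DecidableEq (δ k)]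
    (i j : K) (hij : i ≠ j) (σss' : Matrix Unit Unit ℝ)
    (SsU : Matrix Unit U ℝ) (SUs' : Matrix U Unit ℝ) (SUU : Matrix U U ℝ)
    (hUU : SUU.PosDef)
    (SsD : ∀ k, Matrix Unit (δ k) ℝ) (SDs' : ∀ k, Matrix (δ k) Unit ℝ)
    (SUD : ∀ k, Matrix U (δ k) ℝ)
    (L : ∀ k, Matrix (δ k) (δ k) ℝ) (hL : ∀ k, (L k).PosDef) :
    σss'
      - (Matrix.of fun (_ : Unit) (d : Sigma δ) =>
            if d.1 = i then SsD d.1 () d.2 else (SsU * SUU⁻¹ * SUD d.1) () d.2)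
        * ((Matrix.of fun (d : Sigma δ) (u : U) => SUD d.1 u d.2)
             * SUU⁻¹ * (Matrix.of fun (u : U) (d : Sigma δ) => SUD d.1 u d.2)
           + Matrix.blockDiagonal' L)⁻¹
        * (Matrix.of fun (d : Sigma δ) (_ : Unit) =>
            if d.1 = j then SDs' d.1 d.2 () else ((SUD d.1)ᵀ * SUU⁻¹ * SUs') d.2 ())
    = (σss' - SsU * SUU⁻¹ * SUs')
      + (SsU + SsU * SUU⁻¹ * (SUD i * (L i)⁻¹ * (SUD i)ᵀ)
          - SsD i * (L i)⁻¹ * (SUD i)ᵀ)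
        * (SUU + ∑ k, SUD k * (L k)⁻¹ * (SUD k)ᵀ)⁻¹
        * (SUs' + SUD j * (L j)⁻¹ * (SUD j)ᵀ * SUU⁻¹ * SUs'
            - SUD j * (L j)⁻¹ * SDs' j) := by
  have hS := (posDef_add_sum_mul_inv_mul_conjTranspose hUU SUD fun k => (hL k).posSemidef).isUnit
  simp only [conjTranspose_eq_transpose_of_trivial] at hS
  have h := stmt8_general hij σss' SsU SUs' hUU.isUnit (SsD i) (SDs' j) SUD (fun k => (SUD k)ᵀ)
    (fun k => (hL k).isUnit) hS
  rwa [← of_ite_eq_blockRow_update SsD, ← of_ite_eq_blockCol_update SDs'] at h
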